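/- The relation ⊴_rat on sig-poly-pairs, defined by (u,p) ⊴_rat (v,q) :⇔ lp(q)⊗u ≺_t lp(p)⊗v or (lp(q)⊗u = lp(p)⊗v and u ⪯_t v), with the convention lp(0) = 1, is a rewrite order. -/

import Mathlib

/-!
Read `(u, p) ⊴_rat (v, q)` as a comparison of the fractions `u / lp p` and `v / lp q`, with ties
broken by the numerators. Since `⪯_t` is linear and multiplication of terms is cancellative,
cross-multiplied comparison is a total preorder, and so is its refinement by the numerators.

For the compatibility with divisibility, let `𝔰(b) = t ⊗ 𝔰(a)` with `b` regular top
s-irreducible. It suffices that `lp(‾b) ⪯ t·lp(‾a)`. Otherwise `d = b - c·t·a`, with `c` chosen to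
cancel `𝔰(b)`, has a smaller signature than `b` but the same leading power-product. As `d`
s-reduces to zero, some multiple of an element of `G` top reduces it, and that multiple is a
regular top reducer of `b`.
-/

namespace SigGB

noncomputable section

/-- Power-products in `n` indeterminates, written additively as exponent vectors
(so the power-product `1` is `0`, and multiplication of power-products is `+`). -/
abbrev PP (n : ℕ) : Type := Fin n →₀ ℕ

/-- Terms: a power-product together with a component index (`t·e_i ↝ (t, i)`). -/
abbrev Term (n m : ℕ) : Type := PP n × Fin m

/-- Multiplication of a term by a power-product: `t ⊗ (s·e_i) = (t·s)·e_i`. -/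
def mulTerm {n m : ℕ} (t : PP n) (u : Term n m) : Term n m := (t + u.1, u.2)

/-- Divisibility of terms: `u ∣ v` iff `v = t ⊗ u` for some power-product `t`. -/
def termDvd {n m : ℕ} (u v : Term n m) : Prop := ∃ t : PP n, v = mulTerm t u

/-- Componentwise lcm of power-products. -/
noncomputable def lcmPP {n : ℕ} (s t : PP n) : PP n := Finsupp.zipWith max (max_self 0) s t

/-- Strict part of a relation. -/
def strict {α : Type*} (r : α → α → Prop) (x y : α) : Prop := r x y ∧ x ≠ y

/-- `ple` is an admissible order on power-products and `tle` is a compatible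
linear order on terms. -/
structure OrdersOK {n m : ℕ} (ple : PP n → PP n → Prop)
    (tle : Term n m → Term n m → Prop) : Prop where
  ple_refl : ∀ t, ple t t
  ple_trans : ∀ s t u, ple s t → ple t u → ple s u
  ple_antisymm : ∀ s t, ple s t → ple t s → s = t
  ple_total : ∀ s t, ple s t ∨ ple t s
  ple_one_le : ∀ t, ple 0 t
  ple_mul : ∀ (t s₁ s₂ : PP n), ple s₁ s₂ → ple (t + s₁) (t + s₂)
  tle_refl : ∀ u, tle u u
  tle_trans : ∀ u v w, tle u v → tle v w → tle u w
  tle_antisymm : ∀ u v, tle u v → tle v u → u = v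
  tle_total : ∀ u v, tle u v ∨ tle v u
  tle_mul : ∀ (t : PP n) (u v : Term n m), tle u v → tle (mulTerm t u) (mulTerm t v)
  tle_compat : ∀ (s t : PP n) (i j : Fin m), ple s t → i ≤ j → tle (s, i) (t, j)

variable {K : Type*} [Field K] {n m : ℕ} [NeZero m]

variable (f : Fin m → MvPolynomial (Fin n) K)
variable (ple : PP n → PP n → Prop)
variable (tle : Term n m → Term n m → Prop)

/-- The module homomorphism `R^m → R` determined by `e_i ↦ f i`, i.e. `a ↦ ‾a`. -/
def bar (a : Fin m → MvPolynomial (Fin n) K) : MvPolynomial (Fin n) K := ∑ i, a i * f i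

/-- Multiplication of a module element by a coefficient `c` and a power-product `t`. -/
noncomputable def monomMul (c : K) (t : PP n) (a : Fin m → MvPolynomial (Fin n) K) :
    Fin m → MvPolynomial (Fin n) K :=
  fun i => MvPolynomial.monomial t c * a i

/-- The coefficient of a term in a module element. -/
def coeffM (a : Fin m → MvPolynomial (Fin n) K) (u : Term n m) : K :=
  MvPolynomial.coeff u.1 (a u.2)

open Classical in
/-- Leading power-product of a polynomial w.r.t. `ple`
(junk value `0`, i.e. the power-product `1`, for the zero polynomial). -/
noncomputable def lp (p : MvPolynomial (Fin n) K) : PP n :=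
  if h : ∃ t, MvPolynomial.coeff t p ≠ 0 ∧ ∀ s, MvPolynomial.coeff s p ≠ 0 → ple s t
  then h.choose else 0

/-- Leading coefficient of a polynomial w.r.t. `ple`. -/
noncomputable def lc (p : MvPolynomial (Fin n) K) : K := MvPolynomial.coeff (lp ple p) p

open Classical in
/-- Signature of a module element: its `tle`-largest term with nonzero coefficient
(junk value for `0`). -/
noncomputable def sig (a : Fin m → MvPolynomial (Fin n) K) : Term n m :=
  if h : ∃ u, coeffM a u ≠ 0 ∧ ∀ v, coeffM a v ≠ 0 → tle v u
  then h.choose else ((0 : PP n), (0 : Fin m))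

/-- Leading coefficient of a module element. -/
noncomputable def lcM (a : Fin m → MvPolynomial (Fin n) K) : K := coeffM a (sig tle a)

/-- One-step s-reduction of `a` to `b` modulo `G`, witnessed by `g ∈ G` and the
power-product `t`. -/
def RedStepWith (G : Set (Fin m → MvPolynomial (Fin n) K))
    (a b g : Fin m → MvPolynomial (Fin n) K) (t : PP n) : Prop :=
  g ∈ G ∧ bar f g ≠ 0 ∧
    MvPolynomial.coeff (t + lp ple (bar f g)) (bar f a) ≠ 0 ∧
    b = a - monomMul (MvPolynomial.coeff (t + lp ple (bar f g)) (bar f a) / lc ple (bar f g)) t g ∧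
    tle (mulTerm t (sig tle g)) (sig tle a)

/-- The step witnessed by `g` and `t` is regular: `t ⊗ 𝔰(g) ≺_t 𝔰(a)`. -/
def RegularWith (a g : Fin m → MvPolynomial (Fin n) K) (t : PP n) : Prop :=
  strict tle (mulTerm t (sig tle g)) (sig tle a)

/-- The step witnessed by `g` and `t` is top: `t·lp(‾g) = lp(‾a)`. -/
def TopWith (a g : Fin m → MvPolynomial (Fin n) K) (t : PP n) : Prop :=
  t + lp ple (bar f g) = lp ple (bar f a)

/-- `a` s-reduces to `b` modulo `G` in one step. -/
def SigRedStep (G : Set (Fin m → MvPolynomial (Fin n) K))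
    (a b : Fin m → MvPolynomial (Fin n) K) : Prop :=
  ∃ g t, RedStepWith f ple tle G a b g t

/-- `a` regular s-reduces to `b` modulo `G` in one step. -/
def RegRedStep (G : Set (Fin m → MvPolynomial (Fin n) K))
    (a b : Fin m → MvPolynomial (Fin n) K) : Prop :=
  ∃ g t, RedStepWith f ple tle G a b g t ∧ RegularWith tle a g t

/-- `a` regular top s-reduces to `b` modulo `G` in one step. -/
def RegTopRedStep (G : Set (Fin m → MvPolynomial (Fin n) K))
    (a b : Fin m → MvPolynomial (Fin n) K) : Prop :=
  ∃ g t, RedStepWith f ple tle G a b g t ∧ RegularWith tle a g t ∧ TopWith f ple a g t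

/-- `a` is regular s-irreducible modulo `G`. -/
def RegIrred (G : Set (Fin m → MvPolynomial (Fin n) K))
    (a : Fin m → MvPolynomial (Fin n) K) : Prop :=
  ∀ b, ¬ RegRedStep f ple tle G a b

/-- `a` is regular top s-irreducible modulo `G`. -/
def RegTopIrred (G : Set (Fin m → MvPolynomial (Fin n) K))
    (a : Fin m → MvPolynomial (Fin n) K) : Prop :=
  ∀ b, ¬ RegTopRedStep f ple tle G a b

/-- `a` s-reduces to zero modulo `G`. -/
def SigRedZero (G : Set (Fin m → MvPolynomial (Fin n) K))
    (a : Fin m → MvPolynomial (Fin n) K) : Prop :=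
  ∃ b, Relation.ReflTransGen (SigRedStep f ple tle G) a b ∧ bar f b = 0

/-- `a` regular s-reduces to zero modulo `G`. -/
def RegRedZero (G : Set (Fin m → MvPolynomial (Fin n) K))
    (a : Fin m → MvPolynomial (Fin n) K) : Prop :=
  ∃ b, Relation.ReflTransGen (RegRedStep f ple tle G) a b ∧ bar f b = 0

/-- `G` is a signature Gröbner basis in the term `u`. -/
def IsSigGBIn (G : Set (Fin m → MvPolynomial (Fin n) K)) (u : Term n m) : Prop :=
  ∀ a : Fin m → MvPolynomial (Fin n) K, a ≠ 0 → sig tle a = u → SigRedZero f ple tle G a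

/-- `G` is a signature Gröbner basis up to the term `u`. -/
def IsSigGBUpto (G : Set (Fin m → MvPolynomial (Fin n) K)) (u : Term n m) : Prop :=
  ∀ v, strict tle v u → IsSigGBIn f ple tle G v

/-- `u` is a syzygy signature. -/
def IsSyzSig (u : Term n m) : Prop :=
  ∃ a : Fin m → MvPolynomial (Fin n) K, a ≠ 0 ∧ sig tle a = u ∧ bar f a = 0

/-- The sig-poly-pair `(𝔰(a), ‾a)` of a module element `a`. -/
noncomputable def sppOf (a : Fin m → MvPolynomial (Fin n) K) :
    Term n m × MvPolynomial (Fin n) K :=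
  (sig tle a, bar f a)

/-- `x` is a sig-poly-pair. -/
def IsSPP (x : Term n m × MvPolynomial (Fin n) K) : Prop :=
  ∃ a : Fin m → MvPolynomial (Fin n) K, a ≠ 0 ∧ sppOf f tle a = x

/-- `ro` is a rewrite order. -/
def IsRewriteOrder
    (ro : Term n m × MvPolynomial (Fin n) K → Term n m × MvPolynomial (Fin n) K → Prop) :
    Prop :=
  (∀ x, IsSPP f tle x → ro x x) ∧
  (∀ x y z, IsSPP f tle x → IsSPP f tle y → IsSPP f tle z → ro x y → ro y z → ro x z) ∧
  (∀ x y, IsSPP f tle x → IsSPP f tle y → (ro x y ∨ ro y x)) ∧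
  (∀ x y, IsSPP f tle x → IsSPP f tle y → ro x y → ro y x → x.1 = y.1) ∧
  (∀ (G : Set (Fin m → MvPolynomial (Fin n) K)) (a b : Fin m → MvPolynomial (Fin n) K),
    IsSigGBUpto f ple tle G (sig tle b) → a ∈ G → b ∈ G → a ≠ 0 → b ≠ 0 →
    termDvd (sig tle a) (sig tle b) → RegTopIrred f ple tle G b →
    ro (sppOf f tle a) (sppOf f tle b))

/-- `a` is a canonical rewriter in the term `u` w.r.t. `G` (for the rewrite order `ro`). -/
def IsCanonRewriter
    (ro : Term n m × MvPolynomial (Fin n) K → Term n m × MvPolynomial (Fin n) K → Prop)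
    (G : Set (Fin m → MvPolynomial (Fin n) K)) (u : Term n m)
    (a : Fin m → MvPolynomial (Fin n) K) : Prop :=
  a ∈ G ∧ a ≠ 0 ∧ termDvd (sig tle a) u ∧
    ∀ g ∈ G, g ≠ 0 → termDvd (sig tle g) u → ro (sppOf f tle g) (sppOf f tle a)

/-- `G` is a rewrite basis in the term `u` (for the rewrite order `ro`). -/
def IsRBIn
    (ro : Term n m × MvPolynomial (Fin n) K → Term n m × MvPolynomial (Fin n) K → Prop)
    (G : Set (Fin m → MvPolynomial (Fin n) K)) (u : Term n m) : Prop :=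
  IsSyzSig f tle u ∨
    ∃ g, IsCanonRewriter f tle ro G u g ∧
      RegTopIrred f ple tle G (monomMul (1 : K) (u.1 - (sig tle g).1) g)

/-- `G` is a rewrite basis up to the term `u` (for the rewrite order `ro`). -/
def IsRBUpto
    (ro : Term n m × MvPolynomial (Fin n) K → Term n m × MvPolynomial (Fin n) K → Prop)
    (G : Set (Fin m → MvPolynomial (Fin n) K)) (u : Term n m) : Prop :=
  ∀ v, strict tle v u → IsRBIn f ple tle ro G v

/-- The S-pair of two module elements. -/
noncomputable def spair (a b : Fin m → MvPolynomial (Fin n) K) :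
    Fin m → MvPolynomial (Fin n) K :=
  monomMul ((1 : K) / lc ple (bar f a))
      (lcmPP (lp ple (bar f a)) (lp ple (bar f b)) - lp ple (bar f a)) a -
    monomMul ((1 : K) / lc ple (bar f b))
      (lcmPP (lp ple (bar f a)) (lp ple (bar f b)) - lp ple (bar f b)) b

/-- `a` and `b` give rise to a regular S-pair. -/
def IsRegularSPair (a b : Fin m → MvPolynomial (Fin n) K) : Prop :=
  bar f a ≠ 0 ∧ bar f b ≠ 0 ∧
    mulTerm (lcmPP (lp ple (bar f a)) (lp ple (bar f b)) - lp ple (bar f a)) (sig tle a) ≠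
      mulTerm (lcmPP (lp ple (bar f a)) (lp ple (bar f b)) - lp ple (bar f b)) (sig tle b)

/-- `B` is a Gröbner basis of the ideal `I` w.r.t. `ple`. -/
def IsGroebnerBasis (B : Set (MvPolynomial (Fin n) K)) (I : Ideal (MvPolynomial (Fin n) K)) :
    Prop :=
  (∀ b ∈ B, b ∈ I) ∧ Ideal.span B = I ∧
    ∀ p ∈ I, p ≠ 0 → ∃ b ∈ B, b ≠ 0 ∧ ∃ t : PP n, lp ple p = t + lp ple b

/-- One step of ordinary polynomial reduction of `p` to `q` modulo `B`. -/
def PolyRedStep (B : Set (MvPolynomial (Fin n) K)) (p q : MvPolynomial (Fin n) K) : Prop :=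
  ∃ r ∈ B, r ≠ 0 ∧ ∃ t : PP n, MvPolynomial.coeff (t + lp ple r) p ≠ 0 ∧
    q = p - MvPolynomial.monomial t (MvPolynomial.coeff (t + lp ple r) p / lc ple r) * r

section LinearOrders

variable {α : Type*} {r : α → α → Prop}

theorem strict_iff_not [IsLinearOrder α r] {x y : α} : strict r x y ↔ ¬ r y x :=
  ⟨fun h h' => h.2 (antisymm_of r h.1 h'),
    fun h => ⟨(total_of r x y).resolve_right h, by rintro rfl; exact h (refl_of r x)⟩⟩

theorem strict_of_rel_of_strict [IsLinearOrder α r] {x y z : α} (hxy : r x y)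
    (hyz : strict r y z) : strict r x z :=
  strict_iff_not.2 fun hzx => strict_iff_not.1 hyz (trans_of r hzx hxy)

theorem exists_greatest_of_finite [IsTrans α r] [Std.Total r] {s : Set α} (hs : s.Finite)
    (hne : s.Nonempty) : ∃ x ∈ s, ∀ y ∈ s, r y x := by
  have := hs.to_subtype
  have := hne.to_subtype
  obtain ⟨x, hx⟩ := (Std.Total.directed (r := r) ((↑) : s → α)).finite_le id
  exact ⟨x, x.2, fun y hy => hx ⟨y, hy⟩⟩

end LinearOrders

/-- Admissible orders on power-products: linear orders with least element `1` (written `0`) that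
are compatible with multiplication (written `+`). -/
class IsAdmissible {n : ℕ} (ple : PP n → PP n → Prop) : Prop extends IsLinearOrder (PP n) ple where
  zero_ple : ∀ t, ple 0 t
  add_ple_add_left : ∀ (t : PP n) {s₁ s₂ : PP n}, ple s₁ s₂ → ple (t + s₁) (t + s₂)

/-- Linear orders on terms that are invariant under multiplication by power-products. No relation
to an order on power-products, or between different components, is imposed. -/
class IsTermOrder {n m : ℕ} (tle : Term n m → Term n m → Prop) : Prop
    extends IsLinearOrder (Term n m) tle where
  mulTerm_tle_mulTerm : ∀ (t : PP n) {u v : Term n m}, tle u v → tle (mulTerm t u) (mulTerm t v)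

section Terms

variable {n m : ℕ} {ple : PP n → PP n → Prop} {tle : Term n m → Term n m → Prop}

theorem OrdersOK.isAdmissible (hord : OrdersOK ple tle) : IsAdmissible ple where
  refl := hord.ple_refl
  trans := hord.ple_trans
  antisymm := hord.ple_antisymm
  total := hord.ple_total
  zero_ple := hord.ple_one_le
  add_ple_add_left t _ _ := hord.ple_mul t _ _

theorem OrdersOK.isTermOrder (hord : OrdersOK ple tle) : IsTermOrder tle where
  refl := hord.tle_refl
  trans := hord.tle_trans
  antisymm := hord.tle_antisymm
  total := hord.tle_total
  mulTerm_tle_mulTerm t _ _ := hord.tle_mul t _ _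

theorem mulTerm_mulTerm (s t : PP n) (u : Term n m) :
    mulTerm s (mulTerm t u) = mulTerm (s + t) u := by
  simp only [mulTerm, add_assoc]

theorem mulTerm_left_comm (s t : PP n) (u : Term n m) :
    mulTerm s (mulTerm t u) = mulTerm t (mulTerm s u) := by
  rw [mulTerm_mulTerm, mulTerm_mulTerm, add_comm]

theorem mulTerm_injective (t : PP n) : Function.Injective (mulTerm (m := m) t) := fun _ _ h =>
  Prod.ext (add_left_cancel (Prod.ext_iff.1 h).1) (Prod.ext_iff.1 h).2

theorem mulTerm_tle_mulTerm_iff [IsTermOrder tle] (t : PP n) {u v : Term n m} :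
    tle (mulTerm t u) (mulTerm t v) ↔ tle u v := by
  refine ⟨fun h => (total_of tle u v).elim id fun hvu => ?_, IsTermOrder.mulTerm_tle_mulTerm t⟩
  rw [mulTerm_injective t (antisymm_of tle h (IsTermOrder.mulTerm_tle_mulTerm t hvu))]
  exact refl_of tle v

end Terms

section Fractions

variable {n m : ℕ} {tle : Term n m → Term n m → Prop}

/-- The preorder `u / s ≤ v / t` on fractions of a term by a power-product, cross-multiplied to
`t ⊗ u ⪯_t s ⊗ v`; the pair `(u, s)` encodes `u / s`. -/
def FracLE (tle : Term n m → Term n m → Prop) (x y : Term n m × PP n) : Prop :=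
  tle (mulTerm y.2 x.1) (mulTerm x.2 y.1)

/-- The refinement of `FracLE` in which equal fractions are compared by their numerators. The
relation `⊴_rat` is its pullback along `(u, p) ↦ (u, lp p)`. -/
def RatLE (tle : Term n m → Term n m → Prop) (x y : Term n m × PP n) : Prop :=
  strict tle (mulTerm y.2 x.1) (mulTerm x.2 y.1) ∨
    (mulTerm y.2 x.1 = mulTerm x.2 y.1 ∧ tle x.1 y.1)

theorem FracLE.trans [IsTermOrder tle] {x y z : Term n m × PP n} (hxy : FracLE tle x y)
    (hyz : FracLE tle y z) : FracLE tle x z := by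
  obtain ⟨u, r⟩ := x
  obtain ⟨v, s⟩ := y
  obtain ⟨w, t⟩ := z
  have hleft : tle (mulTerm s (mulTerm t u)) (mulTerm r (mulTerm t v)) := by
    rw [mulTerm_left_comm s, mulTerm_left_comm r]
    exact IsTermOrder.mulTerm_tle_mulTerm t hxy
  have hright : tle (mulTerm r (mulTerm t v)) (mulTerm s (mulTerm r w)) := by
    rw [mulTerm_left_comm s]
    exact IsTermOrder.mulTerm_tle_mulTerm r hyz
  exact (mulTerm_tle_mulTerm_iff s).1 (trans_of tle hleft hright)

theorem ratLE_iff [IsLinearOrder (Term n m) tle] {x y : Term n m × PP n} :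
    RatLE tle x y ↔ FracLE tle x y ∧ (FracLE tle y x → tle x.1 y.1) := by
  constructor
  · rintro (h | ⟨heq, h⟩)
    · exact ⟨h.1, fun h' => absurd h' (strict_iff_not (r := tle).1 h)⟩
    · exact ⟨by rw [FracLE, heq]; exact refl_of tle _, fun _ => h⟩
  · rintro ⟨hle, hnum⟩
    by_cases h : FracLE tle y x
    · exact Or.inr ⟨antisymm_of tle hle h, hnum h⟩
    · exact Or.inl (strict_iff_not.2 h)

theorem RatLE.refl [Std.Refl tle] (x : Term n m × PP n) : RatLE tle x x :=
  Or.inr ⟨rfl, refl_of tle x.1⟩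

theorem RatLE.trans [IsTermOrder tle] {x y z : Term n m × PP n} (hxy : RatLE tle x y)
    (hyz : RatLE tle y z) : RatLE tle x z := by
  obtain ⟨hxy, hxy_num⟩ := ratLE_iff.1 hxy
  obtain ⟨hyz, hyz_num⟩ := ratLE_iff.1 hyz
  exact ratLE_iff.2 ⟨hxy.trans hyz, fun hzx =>
    trans_of tle (hxy_num (hyz.trans hzx)) (hyz_num (hzx.trans hxy))⟩

theorem RatLE.total [IsLinearOrder (Term n m) tle] (x y : Term n m × PP n) :
    RatLE tle x y ∨ RatLE tle y x := by
  have hfrac : FracLE tle x y ∨ FracLE tle y x := total_of tle _ _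
  have hnum : tle x.1 y.1 ∨ tle y.1 x.1 := total_of tle _ _
  simp only [ratLE_iff]
  tauto

theorem RatLE.fst_eq_fst [IsLinearOrder (Term n m) tle] {x y : Term n m × PP n}
    (hxy : RatLE tle x y) (hyx : RatLE tle y x) : x.1 = y.1 := by
  obtain ⟨hxy, hxy_num⟩ := ratLE_iff.1 hxy
  obtain ⟨hyx, hyx_num⟩ := ratLE_iff.1 hyx
  exact antisymm_of tle (hxy_num hyx) (hyx_num hxy)

theorem ratLE_mulTerm [IsLinearOrder (Term n m) tle] {ple : PP n → PP n → Prop} [IsAdmissible ple]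
    (hcompat : ∀ s t i, ple s t → tle (s, i) (t, i)) (u : Term n m) {r s t : PP n}
    (h : ple s (t + r)) : RatLE tle (u, r) (mulTerm t u, s) := by
  have hmono : ∀ {s₁ s₂ : PP n}, ple s₁ s₂ → tle (mulTerm s₁ u) (mulTerm s₂ u) := by
    intro s₁ s₂ hs
    refine hcompat _ _ _ ?_
    rw [add_comm s₁, add_comm s₂]
    exact IsAdmissible.add_ple_add_left u.1 hs
  refine ratLE_iff.2 ⟨?_, fun _ => ?_⟩
  · change tle (mulTerm s u) (mulTerm r (mulTerm t u))
    rw [mulTerm_mulTerm, add_comm r]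
    exact hmono h
  · simpa [mulTerm] using hmono (IsAdmissible.zero_ple t)

end Fractions

section Polynomials

open MvPolynomial

theorem exists_of_coeff_monomial_mul_ne_zero {R σ : Type*} [CommSemiring R] {c : R}
    {s t : σ →₀ ℕ} {p : MvPolynomial σ R} (h : coeff s (monomial t c * p) ≠ 0) :
    ∃ r, s = t + r ∧ coeff r p ≠ 0 := by
  rw [coeff_monomial_mul'] at h
  split_ifs at h with hts
  · exact ⟨s - t, (add_tsub_cancel_of_le hts).symm, right_ne_zero_of_mul h⟩
  · exact absurd rfl h

section LeadingPowerProducts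

variable {ple} {p q : MvPolynomial (Fin n) K}

theorem lp_zero : lp ple (0 : MvPolynomial (Fin n) K) = 0 := by
  simp [lp]

theorem lp_spec [IsTrans (PP n) ple] [Std.Total ple] (hp : p ≠ 0) :
    coeff (lp ple p) p ≠ 0 ∧ ∀ s, coeff s p ≠ 0 → ple s (lp ple p) := by
  have h : ∃ t, coeff t p ≠ 0 ∧ ∀ s, coeff s p ≠ 0 → ple s t :=
    exists_greatest_of_finite (s := {t | coeff t p ≠ 0})
      (p.support.finite_toSet.subset fun _ => mem_support_iff.2) (ne_zero_iff.1 hp)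
  rw [lp, dif_pos h]
  exact h.choose_spec

theorem ple_lp [IsTrans (PP n) ple] [Std.Total ple] {s : PP n} (hs : coeff s p ≠ 0) :
    ple s (lp ple p) :=
  (lp_spec (ne_zero_iff.2 ⟨s, hs⟩)).2 s hs

theorem lp_eq [IsLinearOrder (PP n) ple] {t : PP n} (ht : coeff t p ≠ 0)
    (hmax : ∀ s, coeff s p ≠ 0 → ple s t) : lp ple p = t :=
  antisymm_of ple (hmax _ (lp_spec (ne_zero_iff.2 ⟨t, ht⟩)).1) (ple_lp ht)

theorem ple_of_coeff_monomial_mul_ne_zero [IsAdmissible ple] {c : K} {s t : PP n}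
    (hs : coeff s (monomial t c * p) ≠ 0) : ple s (t + lp ple p) := by
  obtain ⟨r, rfl, hr⟩ := exists_of_coeff_monomial_mul_ne_zero hs
  exact IsAdmissible.add_ple_add_left t (ple_lp hr)

theorem ne_zero_of_strict_lp [IsAdmissible ple] {t : PP n} (ht : strict ple t (lp ple p)) :
    p ≠ 0 := by
  rintro rfl
  rw [lp_zero] at ht
  exact strict_iff_not.1 ht (IsAdmissible.zero_ple t)

theorem coeff_lp_sub_monomial_mul_ne_zero [IsAdmissible ple] {t : PP n}
    (h : strict ple (t + lp ple q) (lp ple p)) (c : K) :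
    coeff (lp ple p) (p - monomial t c * q) ≠ 0 := by
  have hq : coeff (lp ple p) (monomial t c * q) = 0 :=
    not_not.1 fun hne => strict_iff_not.1 h (ple_of_coeff_monomial_mul_ne_zero hne)
  rw [coeff_sub, hq, sub_zero]
  exact (lp_spec (ne_zero_of_strict_lp h)).1

theorem lp_sub_monomial_mul [IsAdmissible ple] {t : PP n}
    (h : strict ple (t + lp ple q) (lp ple p)) (c : K) :
    lp ple (p - monomial t c * q) = lp ple p := by
  refine lp_eq (coeff_lp_sub_monomial_mul_ne_zero h c) fun s hs => ?_
  by_cases hp : coeff s p = 0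
  · have hq : coeff s (monomial t c * q) ≠ 0 := fun hq => hs (by rw [coeff_sub, hp, hq, sub_zero])
    exact trans_of ple (ple_of_coeff_monomial_mul_ne_zero hq) h.1
  · exact ple_lp hp

end LeadingPowerProducts

section ModuleElements

variable {n m : ℕ} {f a b : Fin m → MvPolynomial (Fin n) K}

theorem bar_sub_monomMul (c : K) (t : PP n) :
    bar f (a - monomMul c t b) = bar f a - monomial t c * bar f b := by
  simp [bar, monomMul, sub_mul, Finset.mul_sum, mul_assoc]

theorem ne_zero_of_bar_ne_zero (ha : bar f a ≠ 0) : a ≠ 0 := by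
  rintro rfl
  simp [bar] at ha

theorem coeffM_sub (u : Term n m) : coeffM (a - b) u = coeffM a u - coeffM b u := by
  simp [coeffM]

theorem coeffM_monomMul_mulTerm (c : K) (t : PP n) (u : Term n m) :
    coeffM (monomMul c t a) (mulTerm t u) = c * coeffM a u := by
  simp [coeffM, monomMul, mulTerm]

theorem finite_setOf_coeffM_ne_zero (a : Fin m → MvPolynomial (Fin n) K) :
    {u | coeffM a u ≠ 0}.Finite := by
  refine (Set.finite_iUnion fun i : Fin m =>
    (a i).support.finite_toSet.image fun t => ((t, i) : Term n m)).subset ?_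
  exact fun u hu => Set.mem_iUnion.2 ⟨u.2, u.1, mem_support_iff.2 hu, rfl⟩

theorem exists_coeffM_ne_zero (ha : a ≠ 0) : ∃ u, coeffM a u ≠ 0 := by
  obtain ⟨i, hi⟩ := Function.ne_iff.1 ha
  obtain ⟨t, ht⟩ := ne_zero_iff.1 hi
  exact ⟨(t, i), ht⟩

end ModuleElements

section Signatures

variable {tle} {a b : Fin m → MvPolynomial (Fin n) K}

theorem sig_spec [IsTrans (Term n m) tle] [Std.Total tle] (ha : a ≠ 0) :
    coeffM a (sig tle a) ≠ 0 ∧ ∀ v, coeffM a v ≠ 0 → tle v (sig tle a) := by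
  have h : ∃ u, coeffM a u ≠ 0 ∧ ∀ v, coeffM a v ≠ 0 → tle v u :=
    exists_greatest_of_finite (finite_setOf_coeffM_ne_zero a) (exists_coeffM_ne_zero ha)
  rw [sig, dif_pos h]
  exact h.choose_spec

theorem tle_sig [IsTrans (Term n m) tle] [Std.Total tle] {v : Term n m} (hv : coeffM a v ≠ 0) :
    tle v (sig tle a) :=
  (sig_spec (by rintro rfl; simp [coeffM] at hv)).2 v hv

theorem tle_of_coeffM_monomMul_ne_zero [IsTermOrder tle] {c : K} {t : PP n} {v : Term n m}
    (hv : coeffM (monomMul c t a) v ≠ 0) : tle v (mulTerm t (sig tle a)) := by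
  obtain ⟨r, hr, har⟩ := exists_of_coeff_monomial_mul_ne_zero hv
  have hv_eq : v = mulTerm t (r, v.2) := Prod.ext hr rfl
  rw [hv_eq]
  exact IsTermOrder.mulTerm_tle_mulTerm t (tle_sig har)

theorem sig_sub_monomMul_tle [IsTermOrder tle] {c : K} {t : PP n}
    (hne : a - monomMul c t b ≠ 0) (h : tle (mulTerm t (sig tle b)) (sig tle a)) :
    tle (sig tle (a - monomMul c t b)) (sig tle a) := by
  have hcoeff := (sig_spec (tle := tle) hne).1
  rw [coeffM_sub] at hcoeff
  by_cases ha : coeffM a (sig tle (a - monomMul c t b)) = 0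
  · have hb : coeffM (monomMul c t b) (sig tle (a - monomMul c t b)) ≠ 0 := fun hb =>
      hcoeff (by rw [ha, hb, sub_zero])
    exact trans_of tle (tle_of_coeffM_monomMul_ne_zero hb) h
  · exact tle_sig ha

theorem strict_sig_sub_monomMul [IsTermOrder tle] {t : PP n} (ha : a ≠ 0)
    (hsig : sig tle b = mulTerm t (sig tle a))
    (hne : b - monomMul (lcM tle b / lcM tle a) t a ≠ 0) :
    strict tle (sig tle (b - monomMul (lcM tle b / lcM tle a) t a)) (sig tle b) := by
  have hlc : lcM tle a ≠ 0 := (sig_spec ha).1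
  have hcancel : coeffM (monomMul (lcM tle b / lcM tle a) t a) (sig tle b) = lcM tle b :=
    calc coeffM (monomMul (lcM tle b / lcM tle a) t a) (sig tle b)
        = lcM tle b / lcM tle a * lcM tle a :=
          (congrArg (coeffM _) hsig).trans (coeffM_monomMul_mulTerm _ t _)
      _ = lcM tle b := div_mul_cancel₀ _ hlc
  refine ⟨sig_sub_monomMul_tle hne (hsig ▸ refl_of tle _), fun heq => ?_⟩
  refine (sig_spec (tle := tle) hne).1 ?_
  rw [heq, coeffM_sub, hcancel, lcM, sub_self]

end Signatures

section SignatureReduction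

variable {f ple tle} {G : Set (Fin m → MvPolynomial (Fin n) K)}
  {a b g : Fin m → MvPolynomial (Fin n) K} {t : PP n}

theorem RedStepWith.strict_of_not_topWith [IsLinearOrder (PP n) ple]
    (h : RedStepWith f ple tle G a b g t) (htop : ¬ TopWith f ple a g t) :
    strict ple (t + lp ple (bar f g)) (lp ple (bar f a)) :=
  ⟨ple_lp h.2.2.1, htop⟩

theorem RedStepWith.sig_tle [IsTermOrder tle] (h : RedStepWith f ple tle G a b g t)
    (hb : b ≠ 0) : tle (sig tle b) (sig tle a) := by
  obtain ⟨-, -, -, rfl, hsig⟩ := h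
  exact sig_sub_monomMul_tle hb hsig

theorem SigRedZero.exists_topWith [IsAdmissible ple] [IsTermOrder tle]
    (h : SigRedZero f ple tle G a) (ha : bar f a ≠ 0) :
    ∃ g ∈ G, bar f g ≠ 0 ∧ ∃ t, TopWith f ple a g t ∧ tle (mulTerm t (sig tle g)) (sig tle a) := by
  obtain ⟨e, hae, he⟩ := h
  induction hae using Relation.ReflTransGen.head_induction_on with
  | refl => exact absurd he ha
  | @head a b hstep _ ih =>
    obtain ⟨g, t, hred⟩ := hstep
    have ⟨hgG, hg, _, hb, hsig⟩ := hred
    by_cases htop : TopWith f ple a g t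
    · exact ⟨g, hgG, hg, t, htop, hsig⟩
    have hlt := hred.strict_of_not_topWith htop
    have hbar := (congrArg (bar f) hb).trans (bar_sub_monomMul _ t)
    have hbar_ne : bar f b ≠ 0 :=
      ne_zero_iff.2 ⟨_, hbar ▸ coeff_lp_sub_monomial_mul_ne_zero hlt _⟩
    have hlp : lp ple (bar f b) = lp ple (bar f a) := by rw [hbar, lp_sub_monomial_mul hlt]
    obtain ⟨g₁, hg₁G, hg₁, t₁, htop₁, hsig₁⟩ := ih hbar_ne
    exact ⟨g₁, hg₁G, hg₁, t₁, htop₁.trans hlp,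
      trans_of tle hsig₁ (hred.sig_tle (ne_zero_of_bar_ne_zero hbar_ne))⟩

theorem RegTopIrred.not_regularWith [IsTrans (PP n) ple] [Std.Total ple]
    (hirr : RegTopIrred f ple tle G b) (hgG : g ∈ G) (hg : bar f g ≠ 0) (hb : bar f b ≠ 0)
    (htop : TopWith f ple b g t) : ¬ RegularWith tle b g t := fun hreg => by
  refine hirr _ ⟨g, t, ⟨hgG, hg, ?_, rfl, hreg.1⟩, hreg, htop⟩
  rw [htop]
  exact (lp_spec hb).1

theorem RegTopIrred.lp_ple [IsAdmissible ple] [IsTermOrder tle]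
    (hirr : RegTopIrred f ple tle G b) (hG : IsSigGBUpto f ple tle G (sig tle b)) (ha : a ≠ 0)
    (hsig : sig tle b = mulTerm t (sig tle a)) :
    ple (lp ple (bar f b)) (t + lp ple (bar f a)) := by
  by_contra hnot
  have hlt := strict_iff_not.2 hnot
  set c := lcM tle b / lcM tle a
  set d := b - monomMul c t a
  have hbar : bar f d = bar f b - monomial t c * bar f a := bar_sub_monomMul c t
  have hd : bar f d ≠ 0 := ne_zero_iff.2 ⟨_, hbar ▸ coeff_lp_sub_monomial_mul_ne_zero hlt c⟩
  have hlp : lp ple (bar f d) = lp ple (bar f b) := by rw [hbar, lp_sub_monomial_mul hlt]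
  have hd_ne := ne_zero_of_bar_ne_zero hd
  have hdb : strict tle (sig tle d) (sig tle b) := strict_sig_sub_monomMul ha hsig hd_ne
  obtain ⟨g, hgG, hg, s, htop, hs⟩ := (hG _ hdb d hd_ne rfl).exists_topWith hd
  exact hirr.not_regularWith hgG hg (ne_zero_of_strict_lp hlt) (htop.trans hlp)
    (strict_of_rel_of_strict hs hdb)

end SignatureReduction

end Polynomials

theorem rw_rat_is_rewrite_order_general [IsAdmissible ple] [IsTermOrder tle]
    (hcompat : ∀ s t i, ple s t → tle (s, i) (t, i)) :
    IsRewriteOrder f ple tle fun x y => RatLE tle (x.1, lp ple x.2) (y.1, lp ple y.2) := by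
  refine ⟨fun _ _ => RatLE.refl _, fun _ _ _ _ _ _ => RatLE.trans, fun _ _ _ _ => RatLE.total _ _,
    fun _ _ _ _ => RatLE.fst_eq_fst, ?_⟩
  rintro G a b hG - - ha - ⟨t, hsig⟩ hirr
  have h := ratLE_mulTerm hcompat (sig tle a) (hirr.lp_ple hG ha hsig)
  rwa [← hsig] at h

/-- the relation `⊴_rat` is a rewrite order. -/
theorem rw_rat_is_rewrite_order (hord : OrdersOK ple tle) :
    IsRewriteOrder f ple tle (fun x y =>
      strict tle (mulTerm (lp ple y.2) x.1) (mulTerm (lp ple x.2) y.1) ∨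
        (mulTerm (lp ple y.2) x.1 = mulTerm (lp ple x.2) y.1 ∧ tle x.1 y.1)) := by
  have := hord.isAdmissible
  have := hord.isTermOrder
  exact rw_rat_is_rewrite_order_general f ple tle fun s t i h => hord.tle_compat s t i i h le_rfl

end

end SigGB
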